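/- Suppose that h₂(g₂(ŷ₁)) lies in the range of f for every ŷ₁ ∈ 𝒴₁, and h₂(ŷ₂) lies in the range of f for every ŷ₂ ∈ 𝒴₂. Then for every distortion level D > 0, encoding directly from the input has the same minimal achievable rate as either choice of intermediate layer: R_{Y₂}(D;T) = R_{XY₂}(D;T) = R_{XY₁}(D;T) = R_{Y₁}(D;T). -/

import Mathlib

open scoped BigOperators

/-- Joint distribution P(a,b) = p(a)·k(a)(b) induced by a source `p` and a channel `k`,
as a real number. -/
noncomputable def jointP {A B : Type*} [Fintype A] [Fintype B] (p : PMF A) (k : A → PMF B)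
    (a : A) (b : B) : ℝ :=
  (p a * k a b).toReal

/-- Marginal distribution of the second coordinate of the joint induced by `(p, k)`. -/
noncomputable def margSnd {A B : Type*} [Fintype A] [Fintype B] (p : PMF A) (k : A → PMF B)
    (b : B) : ℝ :=
  ∑ a, jointP p k a b

/-- Mutual information I(A;B) = ∑_{a,b} P(a,b)·log(P(a,b)/(P(a)·P(b))) of the joint
induced by `(p, k)`; the convention 0·log 0 = 0 holds automatically in Lean. -/
noncomputable def mutualInfo {A B : Type*} [Fintype A] [Fintype B] (p : PMF A)
    (k : A → PMF B) : ℝ :=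
  ∑ a, ∑ b, jointP p k a b * Real.log (jointP p k a b / ((p a).toReal * margSnd p k b))

/-- Expected distortion E[d(A,B)] under the joint induced by `(p, k)`. -/
noncomputable def expDist {A B : Type*} [Fintype A] [Fintype B] (p : PMF A) (k : A → PMF B)
    (d : A → B → ℝ) : ℝ :=
  ∑ a, ∑ b, jointP p k a b * d a b

/-- Rate-distortion function: infimum of mutual information over all channels `A → PMF B`
meeting the expected-distortion constraint `≤ D`. -/
noncomputable def rate {A B : Type*} [Fintype A] [Fintype B] (p : PMF A) (d : A → B → ℝ)
    (D : ℝ) : ℝ :=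
  sInf { r : ℝ | ∃ k : A → PMF B, expDist p k d ≤ D ∧ r = mutualInfo p k }

/-- Conditional probability P(A = a | B = b) under the joint induced by `(p, k)`. -/
noncomputable def condProb {A B : Type*} [Fintype A] [Fintype B] (p : PMF A) (k : A → PMF B)
    (a : A) (b : B) : ℝ :=
  jointP p k a b / margSnd p k b

section LogSum

/-- The log-sum inequality. -/
theorem sum_mul_log_sum_div_sum_le {ι : Type*} (s : Finset ι) (P Q : ι → ℝ)
    (hP : ∀ i ∈ s, 0 ≤ P i) (hQ : ∀ i ∈ s, 0 ≤ Q i) (hPQ : ∀ i ∈ s, Q i = 0 → P i = 0) :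
    (∑ i ∈ s, P i) * Real.log ((∑ i ∈ s, P i) / ∑ i ∈ s, Q i)
      ≤ ∑ i ∈ s, P i * Real.log (P i / Q i) := by
  rcases (Finset.sum_nonneg hP).eq_or_lt with h0 | hpos
  · have hz : ∀ i ∈ s, P i = 0 := (Finset.sum_eq_zero_iff_of_nonneg hP).1 h0.symm
    rw [← h0, zero_mul, Finset.sum_eq_zero fun i hi => by rw [hz i hi, zero_mul]]
  · have hQpos : 0 < ∑ i ∈ s, Q i := by
      refine (Finset.sum_nonneg hQ).lt_of_ne fun h => hpos.ne' ?_
      have hz := (Finset.sum_eq_zero_iff_of_nonneg hQ).1 h.symm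
      exact Finset.sum_eq_zero fun i hi => hPQ i hi (hz i hi)
    set c := (∑ i ∈ s, P i) / ∑ i ∈ s, Q i with hc
    have hcpos : 0 < c := div_pos hpos hQpos
    have hcQ : c * ∑ i ∈ s, Q i = ∑ i ∈ s, P i := div_mul_cancel₀ _ hQpos.ne'
    have key : ∀ i ∈ s, P i * Real.log c + (P i - c * Q i) ≤ P i * Real.log (P i / Q i) := by
      intro i hi
      rcases (hP i hi).eq_or_lt with h | h
      · rw [← h]
        have := mul_nonneg hcpos.le (hQ i hi)
        simp only [zero_mul]
        linarith
      · have hq : 0 < Q i := (hQ i hi).lt_of_ne fun hq => h.ne' (hPQ i hi hq.symm)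
        have h1 := Real.one_sub_inv_le_log_of_pos (div_pos (div_pos h hq) hcpos)
        rw [Real.log_div (div_pos h hq).ne' hcpos.ne'] at h1
        have h2 := mul_le_mul_of_nonneg_left h1 h.le
        have h3 : P i * (1 - (P i / Q i / c)⁻¹) = P i - c * Q i := by
          field_simp
        linarith
    have := Finset.sum_le_sum key
    rw [Finset.sum_add_distrib, Finset.sum_sub_distrib, ← Finset.sum_mul, ← Finset.mul_sum, hcQ,
      sub_self, add_zero] at this
    exact this

end LogSum

open Classical in
theorem PMF.toReal_map_apply {α β : Type*} [Fintype α] (p : PMF α) (g : α → β) (a' : β) :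
    (p.map g a').toReal = ∑ a with g a = a', (p a).toReal := by
  rw [PMF.map_apply, tsum_fintype, Finset.sum_filter, ENNReal.toReal_sum]
  · refine Finset.sum_congr rfl fun a _ => ?_
    by_cases h : g a = a'
    · simp [h]
    · simp [h, Ne.symm h]
  · intro a _
    split_ifs
    · exact p.apply_ne_top a
    · exact ENNReal.zero_ne_top

section Channel

variable {A B A' B' : Type*} [Fintype A] [Fintype B] [Fintype A'] [Fintype B']

theorem jointP_nonneg (p : PMF A) (k : A → PMF B) (a : A) (b : B) : 0 ≤ jointP p k a b :=
  ENNReal.toReal_nonneg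

theorem margSnd_nonneg (p : PMF A) (k : A → PMF B) (b : B) : 0 ≤ margSnd p k b :=
  Finset.sum_nonneg fun a _ => jointP_nonneg p k a b

theorem PMF.sum_toReal_eq_one (p : PMF A) : ∑ a, (p a).toReal = 1 := by
  rw [← ENNReal.toReal_sum fun a _ => p.apply_ne_top a, ← tsum_fintype (L := .unconditional A),
    p.tsum_coe, ENNReal.toReal_one]

theorem sum_jointP_snd (p : PMF A) (k : A → PMF B) (a : A) :
    ∑ b, jointP p k a b = (p a).toReal := by
  simp only [jointP, ENNReal.toReal_mul]
  rw [← Finset.mul_sum, PMF.sum_toReal_eq_one, mul_one]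

theorem sum_margSnd (p : PMF A) (k : A → PMF B) : ∑ b, margSnd p k b = 1 := by
  simp only [margSnd]
  rw [Finset.sum_comm]
  simp only [sum_jointP_snd, PMF.sum_toReal_eq_one]

theorem jointP_eq_zero_of_mul_eq_zero (p : PMF A) (k : A → PMF B) (a : A) (b : B)
    (h : (p a).toReal * margSnd p k b = 0) : jointP p k a b = 0 := by
  rcases mul_eq_zero.1 h with h | h
  · rw [jointP, ENNReal.toReal_mul, h, zero_mul]
  · exact (Finset.sum_eq_zero_iff_of_nonneg fun a _ => jointP_nonneg p k a b).1 h a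
      (Finset.mem_univ a)

theorem mutualInfo_nonneg (p : PMF A) (k : A → PMF B) : 0 ≤ mutualInfo p k := by
  have h := sum_mul_log_sum_div_sum_le (Finset.univ ×ˢ Finset.univ : Finset (A × B))
    (fun x => jointP p k x.1 x.2) (fun x => (p x.1).toReal * margSnd p k x.2)
    (fun x _ => jointP_nonneg p k _ _)
    (fun x _ => mul_nonneg ENNReal.toReal_nonneg (margSnd_nonneg p k _))
    (fun x _ => jointP_eq_zero_of_mul_eq_zero p k _ _)
  simp only [Finset.sum_product, ← Finset.mul_sum, sum_margSnd, sum_jointP_snd, mul_one,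
    PMF.sum_toReal_eq_one, div_one, Real.log_one, mul_zero] at h
  exact h

/-- Mutual information is the expectation of `log (k(b | a) / P(b))`. -/
theorem mutualInfo_eq_expDist (p : PMF A) (k : A → PMF B) :
    mutualInfo p k = expDist p k fun a b => Real.log ((k a b).toReal / margSnd p k b) := by
  refine Finset.sum_congr rfl fun a _ => Finset.sum_congr rfl fun b _ => ?_
  rw [jointP, ENNReal.toReal_mul]
  by_cases h : (p a).toReal = 0
  · simp [h]
  · rw [mul_div_mul_left _ _ h]

open Classical in
/-- The joint law of `(p', k')` is the pushforward of that of `(p, k)` under `g × φ`. -/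
def IsPushforward (p : PMF A) (k : A → PMF B) (p' : PMF A') (k' : A' → PMF B')
    (g : A → A') (φ : B → B') : Prop :=
  ∀ a' b', jointP p' k' a' b' = ∑ a with g a = a', ∑ b with φ b = b', jointP p k a b

namespace IsPushforward

variable {p : PMF A} {k : A → PMF B} {p' : PMF A'} {k' : A' → PMF B'} {g : A → A'} {φ : B → B'}

theorem expDist_eq (h : IsPushforward p k p' k' g φ) (d : A' → B' → ℝ) :
    expDist p' k' d = expDist p k fun a b => d (g a) (φ b) := by
  classical
  have key : ∀ a' b', jointP p' k' a' b' * d a' b'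
      = ∑ a with g a = a', ∑ b with φ b = b', jointP p k a b * d (g a) (φ b) := by
    intro a' b'
    rw [h a' b', Finset.sum_mul]
    refine Finset.sum_congr (by congr) fun a ha => ?_
    rw [Finset.sum_mul]
    refine Finset.sum_congr (by congr) fun b hb => ?_
    rw [(Finset.mem_filter.1 ha).2, (Finset.mem_filter.1 hb).2]
  simp only [expDist, key]
  rw [← Finset.sum_fiberwise Finset.univ g]
  refine Finset.sum_congr rfl fun a' _ => ?_
  rw [Finset.sum_comm]
  exact Finset.sum_congr rfl fun a _ => Finset.sum_fiberwise Finset.univ φ _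

open Classical in
theorem source_eq (h : IsPushforward p k p' k' g φ) (a' : A') :
    (p' a').toReal = ∑ a with g a = a', (p a).toReal := by
  rw [← sum_jointP_snd p' k', Finset.sum_congr rfl fun b' _ => h a' b', Finset.sum_comm]
  exact Finset.sum_congr rfl fun a _ =>
    (Finset.sum_fiberwise Finset.univ φ _).trans (sum_jointP_snd p k a)

open Classical in
theorem margSnd_eq (h : IsPushforward p k p' k' g φ) (b' : B') :
    margSnd p' k' b' = ∑ b with φ b = b', margSnd p k b := by
  simp only [margSnd]
  rw [Finset.sum_congr rfl fun a' _ => h a' b']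
  exact (Finset.sum_fiberwise Finset.univ g _).trans Finset.sum_comm

/-- Data processing inequality for deterministic processing of both coordinates. -/
theorem mutualInfo_le (h : IsPushforward p k p' k' g φ) : mutualInfo p' k' ≤ mutualInfo p k := by
  classical
  set F : A → B → ℝ := fun a b =>
    jointP p k a b * Real.log (jointP p k a b / ((p a).toReal * margSnd p k b)) with hF
  have key : ∀ a' b',
      jointP p' k' a' b' * Real.log (jointP p' k' a' b' / ((p' a').toReal * margSnd p' k' b'))
        ≤ ∑ a with g a = a', ∑ b with φ b = b', F a b := by
    intro a' b'
    have hls := sum_mul_log_sum_div_sum_le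
      (({a | g a = a'} : Finset A) ×ˢ ({b | φ b = b'} : Finset B))
      (fun x => jointP p k x.1 x.2) (fun x => (p x.1).toReal * margSnd p k x.2)
      (fun x _ => jointP_nonneg p k _ _)
      (fun x _ => mul_nonneg ENNReal.toReal_nonneg (margSnd_nonneg p k _))
      (fun x _ => jointP_eq_zero_of_mul_eq_zero p k _ _)
    simp only [Finset.sum_product, ← Finset.mul_sum, ← Finset.sum_mul] at hls
    rw [h a' b', h.source_eq, h.margSnd_eq]
    convert hls
  calc mutualInfo p' k' ≤ ∑ a', ∑ b', ∑ a with g a = a', ∑ b with φ b = b', F a b :=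
        Finset.sum_le_sum fun a' _ => Finset.sum_le_sum fun b' _ => key a' b'
    _ = mutualInfo p k := by
        rw [mutualInfo, ← Finset.sum_fiberwise Finset.univ g]
        refine Finset.sum_congr rfl fun a' _ => ?_
        rw [Finset.sum_comm]
        exact Finset.sum_congr rfl fun a _ => Finset.sum_fiberwise Finset.univ φ _

end IsPushforward

theorem isPushforward_map_source (p : PMF A) (g : A → A') (k : A' → PMF B) :
    IsPushforward p (fun a => k (g a)) (p.map g) k g id := by
  classical
  intro a' b
  rw [jointP, ENNReal.toReal_mul, PMF.toReal_map_apply, Finset.sum_mul]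
  refine Finset.sum_congr rfl fun a ha => ?_
  simp [Finset.sum_filter, jointP, (Finset.mem_filter.1 ha).2]

theorem isPushforward_map_target (p : PMF A) (k : A → PMF B) (φ : B → B') :
    IsPushforward p k p (fun a => (k a).map φ) id φ := by
  classical
  intro a b'
  rw [jointP, ENNReal.toReal_mul, PMF.toReal_map_apply, Finset.mul_sum]
  simp [Finset.sum_filter, jointP]

theorem exists_isPushforward_map_source (p : PMF A) (g : A → A') (k : A → PMF B) :
    ∃ k' : A' → PMF B, IsPushforward p k (p.map g) k' g id := by
  classical
  obtain ⟨a₀, -⟩ := p.support_nonempty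
  have hex : ∀ y, ∃ q : PMF B, ∀ b,
      ((p.map g) y).toReal * (q b).toReal = ∑ a with g a = y, jointP p k a b := by
    intro y
    by_cases hy : ∃ a ∈ {a | g a = y}, a ∈ p.support
    · refine ⟨(p.filter {a | g a = y} hy).bind k, fun b => ?_⟩
      have hsum : (∑' a, Set.indicator {a | g a = y} p a) = p.map g y := by
        rw [PMF.map_apply]
        refine tsum_congr fun a => ?_
        by_cases h : g a = y
        · simp [h]
        · simp [h, Ne.symm h]
      have hne : p.map g y ≠ 0 := by
        obtain ⟨a, ha, hp⟩ := hy
        exact (PMF.mem_support_iff _ _).1 ((PMF.mem_support_map_iff _ _ _).2 ⟨a, hp, ha⟩)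
      rw [← ENNReal.toReal_mul, PMF.bind_apply, tsum_fintype, Finset.mul_sum, ENNReal.toReal_sum,
        Finset.sum_filter]
      · refine Finset.sum_congr rfl fun a _ => ?_
        rw [PMF.filter_apply, hsum]
        by_cases h : g a = y
        · simp only [Set.mem_ofPred_eq, h, Set.indicator_of_mem, if_true, jointP]
          rw [← mul_assoc, mul_comm (p a), ← mul_assoc,
            ENNReal.mul_inv_cancel hne ((p.map g).apply_ne_top y), one_mul]
        · simp [h]
      · exact fun a _ => ENNReal.mul_ne_top ((p.map g).apply_ne_top y)
          (ENNReal.mul_ne_top (PMF.apply_ne_top _ _) (PMF.apply_ne_top _ _))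
    · refine ⟨k a₀, fun b => ?_⟩
      have hz : ∀ a ∈ ({a | g a = y} : Finset A), p a = 0 := by
        intro a ha
        by_contra hp
        exact hy ⟨a, (Finset.mem_filter.1 ha).2, (PMF.mem_support_iff _ _).2 hp⟩
      rw [PMF.toReal_map_apply, Finset.sum_eq_zero fun a ha => by rw [hz a ha, ENNReal.toReal_zero],
        zero_mul, Finset.sum_eq_zero fun a ha => by rw [jointP, hz a ha, zero_mul,
          ENNReal.toReal_zero]]
  choose k' hk' using hex
  refine ⟨k', fun y b => ?_⟩
  rw [jointP, ENNReal.toReal_mul, hk']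
  simp [Finset.sum_filter]

theorem mutualInfo_comp_source (p : PMF A) (g : A → A') (k : A' → PMF B) :
    mutualInfo p (fun a => k (g a)) = mutualInfo (p.map g) k := by
  have h := isPushforward_map_source p g k
  rw [mutualInfo_eq_expDist, mutualInfo_eq_expDist, h.expDist_eq]
  have hm : ∀ b, margSnd (p.map g) k b = margSnd p (fun a => k (g a)) b := fun b => by
    classical
    rw [h.margSnd_eq]
    simp [Finset.sum_filter]
  simp only [hm, id]

/-- Two rates agree when every admissible channel of either problem is dominated by an admissible
channel of the other. -/
theorem rate_eq_of_dominated {p : PMF A} {p' : PMF A'} {d : A → B → ℝ} {d' : A' → B' → ℝ} {D : ℝ}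
    (h : ∀ k : A → PMF B, ∃ k' : A' → PMF B',
      expDist p' k' d' ≤ expDist p k d ∧ mutualInfo p' k' ≤ mutualInfo p k)
    (h' : ∀ k' : A' → PMF B', ∃ k : A → PMF B,
      expDist p k d ≤ expDist p' k' d' ∧ mutualInfo p k ≤ mutualInfo p' k') :
    rate p d D = rate p' d' D := by
  have hbdd : BddBelow {r : ℝ | ∃ k : A → PMF B, expDist p k d ≤ D ∧ r = mutualInfo p k} :=
    ⟨0, by rintro _ ⟨k, -, rfl⟩; exact mutualInfo_nonneg p k⟩
  have hbdd' : BddBelow {r : ℝ | ∃ k : A' → PMF B', expDist p' k d' ≤ D ∧ r = mutualInfo p' k} :=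
    ⟨0, by rintro _ ⟨k, -, rfl⟩; exact mutualInfo_nonneg p' k⟩
  by_cases hne : ∃ k : A → PMF B, expDist p k d ≤ D
  · obtain ⟨k₀, hk₀⟩ := hne
    obtain ⟨k₀', hd₀, -⟩ := h k₀
    apply le_antisymm
    · refine le_csInf ⟨_, k₀', hd₀.trans hk₀, rfl⟩ ?_
      rintro _ ⟨k', hk', rfl⟩
      obtain ⟨k, hd, hm⟩ := h' k'
      exact (csInf_le hbdd ⟨k, hd.trans hk', rfl⟩).trans hm
    · refine le_csInf ⟨_, k₀, hk₀, rfl⟩ ?_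
      rintro _ ⟨k, hk, rfl⟩
      obtain ⟨k', hd, hm⟩ := h k
      exact (csInf_le hbdd' ⟨k', hd.trans hk, rfl⟩).trans hm
  · have hne' : ¬ ∃ k' : A' → PMF B', expDist p' k' d' ≤ D := by
      rintro ⟨k', hk'⟩
      obtain ⟨k, hd, -⟩ := h' k'
      exact hne ⟨k, hd.trans hk'⟩
    rw [rate, rate]
    congr 1
    ext r
    exact ⟨fun ⟨k, hk, _⟩ => (hne ⟨k, hk⟩).elim, fun ⟨k, hk, _⟩ => (hne' ⟨k, hk⟩).elim⟩

/-- The rate is unchanged when the source is replaced by a statistic through which the distortion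
factors. -/
theorem rate_comp_source (p : PMF A) (g : A → A') (d : A' → B → ℝ) (D : ℝ) :
    rate p (fun a b => d (g a) b) D = rate (p.map g) d D := by
  refine rate_eq_of_dominated (fun k => ?_) fun k' => ?_
  · obtain ⟨k', h⟩ := exists_isPushforward_map_source p g k
    exact ⟨k', (h.expDist_eq d).le, h.mutualInfo_le⟩
  · exact ⟨fun a => k' (g a), ((isPushforward_map_source p g k').expDist_eq d).ge,
      (mutualInfo_comp_source p g k').le⟩

/-- The rate is unchanged when the reproduction alphabet is replaced by another one that realizes
the same distortions. -/
theorem rate_eq_of_reproduction_maps (p : PMF A) {d : A → B → ℝ} {d' : A → B' → ℝ}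
    (φ : B → B') (ψ : B' → B) (hφ : ∀ a b, d' a (φ b) = d a b) (hψ : ∀ a b, d a (ψ b) = d' a b)
    (D : ℝ) : rate p d D = rate p d' D := by
  refine rate_eq_of_dominated (fun k => ?_) fun k' => ?_
  · have h := isPushforward_map_target p k φ
    refine ⟨_, ?_, h.mutualInfo_le⟩
    simp only [h.expDist_eq d', id, hφ]
    exact le_rfl
  · have h := isPushforward_map_target p k' ψ
    refine ⟨_, ?_, h.mutualInfo_le⟩
    simp only [h.expDist_eq d, id, hψ]
    exact le_rfl

end Channel

/-- With f = h₂ ∘ g₂ ∘ g₁, under the same range conditions, for every D > 0,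
R_{Y₂}(D;T) = R_{XY₂}(D;T) = R_{XY₁}(D;T) = R_{Y₁}(D;T). -/
theorem direct_and_split_points_equal_rates
    {𝒳 𝒴₁ 𝒴₂ 𝒯 : Type*} [Fintype 𝒳] [Fintype 𝒴₁] [Fintype 𝒴₂] [Fintype 𝒯]
    [Nonempty 𝒳] [Nonempty 𝒴₁] [Nonempty 𝒴₂] [Nonempty 𝒯]
    (pX : PMF 𝒳) (g₁ : 𝒳 → 𝒴₁) (g₂ : 𝒴₁ → 𝒴₂) (h₂ : 𝒴₂ → 𝒯)
    (dT : 𝒯 → 𝒯 → ℝ) (hdT : ∀ t t', 0 ≤ dT t t')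
    (hr1 : ∀ yhat₁ : 𝒴₁, h₂ (g₂ yhat₁) ∈ Set.range (fun x => h₂ (g₂ (g₁ x))))
    (hr2 : ∀ yhat₂ : 𝒴₂, h₂ yhat₂ ∈ Set.range (fun x => h₂ (g₂ (g₁ x))))
    (D : ℝ) (hD : 0 < D) :
    rate ((pX.map g₁).map g₂) (fun y₂ yhat₂ => dT (h₂ y₂) (h₂ yhat₂)) D
        = rate pX (fun x yhat₂ => dT (h₂ (g₂ (g₁ x))) (h₂ yhat₂)) D ∧
    rate pX (fun x yhat₂ => dT (h₂ (g₂ (g₁ x))) (h₂ yhat₂)) D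
        = rate pX (fun x yhat₁ => dT (h₂ (g₂ (g₁ x))) (h₂ (g₂ yhat₁))) D ∧
    rate pX (fun x yhat₁ => dT (h₂ (g₂ (g₁ x))) (h₂ (g₂ yhat₁))) D
        = rate (pX.map g₁) (fun y₁ yhat₁ => dT (h₂ (g₂ y₁)) (h₂ (g₂ yhat₁))) D := by
  choose ψ hψ using hr2
  refine ⟨?_, ?_, ?_⟩
  · rw [PMF.map_comp]
    exact (rate_comp_source pX (g₂ ∘ g₁) (fun y₂ yhat₂ => dT (h₂ y₂) (h₂ yhat₂)) D).symm
  · refine rate_eq_of_reproduction_maps pX (fun y₂ => g₁ (ψ y₂)) g₂ (fun x y₂ => ?_)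
      (fun _ _ => rfl) D
    exact congrArg (dT _) (hψ y₂)
  · exact rate_comp_source pX g₁ (fun y₁ yhat₁ => dT (h₂ (g₂ y₁)) (h₂ (g₂ yhat₁))) D
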